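/- Let T ∈ (0,1). If Z(T) = ∑_{p ∈ dom U} 2^{−|p|/T} is a left-computable real number and T is a right-computable real number, then T is T-compressible, i.e., limsup_{n→∞} H(T_n)/n ≤ T. -/

import Mathlib

open Filter

/-- A set of finite binary strings is prefix-free if no element of it is a
prefix of another (distinct) element of it. -/
def PrefixFree (S : Set (List Bool)) : Prop :=
  ∀ p ∈ S, ∀ q ∈ S, p <+: q → p = q

/-- A computer: a partial recursive function from finite binary strings to
finite binary strings whose domain is a prefix-free set. -/
structure Computer where
  f : List Bool →. List Bool
  partrec : Partrec f
  prefixFree : PrefixFree {p | (f p).Dom}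

/-- The domain of a computer. -/
def Computer.domain (C : Computer) : Set (List Bool) := {p | (C.f p).Dom}

/-- A computer `U` is optimal if every computer can be simulated on `U` with
only a constant increase in program length. -/
def IsOptimal (U : Computer) : Prop :=
  ∀ C : Computer, ∃ d : ℕ, ∀ p : List Bool, (C.f p).Dom →
    ∃ p' : List Bool, p'.length ≤ p.length + d ∧ ∀ s, s ∈ C.f p → s ∈ U.f p'

/-- Program-size complexity `H(s)`: the minimal length of a program `p`
with `U(p) = s`. -/
noncomputable def H (U : Computer) (s : List Bool) : ℕ :=
  sInf {n | ∃ p : List Bool, p.length = n ∧ s ∈ U.f p}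

/-- The `n`-th bit (`n ≥ 1`) of the base-two expansion of `x mod 1`
(the expansion chosen with infinitely many zeros). -/
noncomputable def binDigit (x : ℝ) (n : ℕ) : Bool :=
  decide (⌊Int.fract x * 2 ^ n⌋ % 2 = 1)

/-- The first `n` bits of the base-two expansion of `x mod 1` (with
infinitely many zeros). -/
noncomputable def bits (x : ℝ) (n : ℕ) : List Bool :=
  (List.range n).map fun i => binDigit x (i + 1)

/-- A real `x` is weakly Chaitin `D`-random (w.r.t. the computer `U`). -/
def WeaklyChaitinRandom (U : Computer) (D x : ℝ) : Prop :=
  ∃ c : ℝ, ∀ n : ℕ, 1 ≤ n → D * n - c ≤ (H U (bits x n) : ℝ)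

/-- A real `x` is Chaitin `D`-random (w.r.t. the computer `U`). -/
def ChaitinRandom (U : Computer) (D x : ℝ) : Prop :=
  Tendsto (fun n : ℕ => (H U (bits x n) : ℝ) - D * n) atTop atTop

/-- A real `x` is `D`-compressible (w.r.t. the computer `U`). -/
def DCompressible (U : Computer) (D x : ℝ) : Prop :=
  Filter.limsup (fun n : ℕ => (H U (bits x n) : ℝ) / n) atTop ≤ D

/-- A computable real number. -/
def ComputableReal (T : ℝ) : Prop :=
  ∃ f : ℕ → ℚ, Computable f ∧ ∀ n : ℕ, 1 ≤ n → |T - (f n : ℝ)| < 1 / n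

/-- A right-computable real number. -/
def RightComputable (T : ℝ) : Prop :=
  ∃ g : ℕ → ℚ, Computable g ∧ (∀ n, T ≤ (g n : ℝ)) ∧
    Tendsto (fun n => ((g n : ℚ) : ℝ)) atTop (nhds T)

/-- A left-computable real number. -/
def LeftComputable (T : ℝ) : Prop := RightComputable (-T)

/-- The term `2 ^ (-|p| / T)` of the partition function `Z(T)`. -/
noncomputable def zterm (U : Computer) (T : ℝ) (p : U.domain) : ℝ :=
  (2 : ℝ) ^ (-((p : List Bool).length : ℝ) / T)

/-- The term `|p| ^ Q * 2 ^ (-|p| / T)` of `W(Q,T)`. -/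
noncomputable def wterm (U : Computer) (Q T : ℝ) (p : U.domain) : ℝ :=
  ((p : List Bool).length : ℝ) ^ Q * (2 : ℝ) ^ (-((p : List Bool).length : ℝ) / T)

/-- The term `|p| * 2 ^ (-|p| / T)` of `W(1,T)`. -/
noncomputable def wlterm (U : Computer) (T : ℝ) (p : U.domain) : ℝ :=
  ((p : List Bool).length : ℝ) * (2 : ℝ) ^ (-((p : List Bool).length : ℝ) / T)

/-- The term `|p| ^ 2 * 2 ^ (-|p| / T)` of `W(2,T)`. -/
noncomputable def wsqterm (U : Computer) (T : ℝ) (p : U.domain) : ℝ :=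
  ((p : List Bool).length : ℝ) ^ 2 * (2 : ℝ) ^ (-((p : List Bool).length : ℝ) / T)

/-- A lower-computable function `f : ℕ⁺ → [0,∞)` (represented on `ℕ`,
with all conditions imposed on positive arguments). -/
def LowerComputableFun (f : ℕ → ℝ) : Prop :=
  ∃ a : ℕ → ℕ → ℚ, Computable₂ a ∧
    (∀ k n : ℕ, 1 ≤ k → 1 ≤ n → (a k n : ℝ) ≤ f n) ∧
    (∀ n : ℕ, 1 ≤ n → Tendsto (fun k => ((a k n : ℚ) : ℝ)) atTop (nhds (f n)))

/-- A lower-computable semi-measure on finite binary strings. -/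
def LowerComputableSemiMeasure (r : List Bool → ℝ) : Prop :=
  (∀ s, 0 ≤ r s) ∧ (∀ s, r s ≤ 1) ∧ Summable r ∧ (∑' s, r s) ≤ 1 ∧
    ∃ f : ℕ → List Bool → ℚ, Computable₂ f ∧
      (∀ n s, ((f n s : ℚ) : ℝ) ≤ r s) ∧
      (∀ s, Tendsto (fun n => ((f n s : ℚ) : ℝ)) atTop (nhds (r s)))

/-- A universal probability. -/
def UniversalProbability (m : List Bool → ℝ) : Prop :=
  LowerComputableSemiMeasure m ∧
    ∀ r : List Bool → ℝ, LowerComputableSemiMeasure r →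
      ∃ c : ℝ, 0 < c ∧ ∀ s, c * r s ≤ m s

/-!
If `L` bits determine `T` to within `C * 2 ^ (-L / T)`, then about `T * n` bits determine `n` bits
of `T`, and cutting them into long blocks makes them self-delimiting at a small relative cost.

The `L` bits are the first bits of the halting probability `Ω = Z(1)`. They determine a finite stage
of the enumeration of `U.domain` after which the remaining programs have total weight at most `2⁻ᴸ`
at temperature `1`. Each of these then has length at least `L`, so their total weight at temperature
`T` is at most `2 ^ (-L / T)`: the partial sum of `Z(T)` at that stage misses `Z(T)` by no more.
Once an approximation `t ≥ T` makes the partial sum at temperature `t` visibly smaller than `Z(T)`,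
the growth of its first term alone forces `t - T ≤ C * 2 ^ (-L / T)`.
-/

section ComputableSearch

variable {α β σ : Type*} [Primcodable α] [Primcodable β] [Primcodable σ]

theorem computablePred_comp {p : β → Prop} {f : α → β} (hp : ComputablePred p)
    (hf : Computable f) : ComputablePred fun a => p (f a) := by
  obtain ⟨g, hg, rfl⟩ := ComputablePred.computable_iff.1 hp
  exact ComputablePred.computable_iff.2 ⟨_, hg.comp hf, rfl⟩

theorem computablePred_and {p q : α → Prop} (hp : ComputablePred p) (hq : ComputablePred q) :
    ComputablePred fun a => p a ∧ q a := by
  obtain ⟨f, hf, rfl⟩ := ComputablePred.computable_iff.1 hp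
  obtain ⟨g, hg, rfl⟩ := ComputablePred.computable_iff.1 hq
  refine ComputablePred.computable_iff.2 ⟨_, Primrec.and.to_comp.comp hf hg, ?_⟩
  simp

theorem computablePred_eq_comp {f g : α → σ} (hf : Computable f) (hg : Computable g) :
    ComputablePred fun a => f a = g a := by
  classical
  exact computablePred_comp (PrimrecPred.computablePred Primrec.eq) (hf.pair hg)

theorem computablePred_lt_comp {f g : α → ℕ} (hf : Computable f) (hg : Computable g) :
    ComputablePred fun a => f a < g a :=
  computablePred_comp (PrimrecPred.computablePred Primrec.nat_lt) (hf.pair hg)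

theorem exists_partrec_selector {R : α → β → Prop}
    (hR : ComputablePred fun x : α × β => R x.1 x.2) :
    ∃ F : α →. β, Partrec F ∧ (∀ a, ∀ b ∈ F a, R a b) ∧ ∀ a b, R a b → (F a).Dom := by
  classical
  obtain ⟨c, hc, hcR⟩ := ComputablePred.computable_iff.1 hR
  have hcR (a : α) (b : β) : R a b ↔ c (a, b) = true := iff_of_eq (congrFun hcR (a, b))
  let search (a : α) (n : ℕ) : Option β :=
    (Encodable.decode (α := β) n).bind fun b => bif c (a, b) then some b else none
  have hsearch : Computable₂ search :=
    Computable.option_bind (Computable.decode.comp Computable.snd) <|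
      Computable.cond (hc.comp ((Computable.fst.comp Computable.fst).pair Computable.snd))
        (Computable.option_some.comp Computable.snd) (Computable.const none)
  refine ⟨fun a => Nat.rfindOpt (search a), Partrec.rfindOpt hsearch, fun a b hb => ?_,
    fun a b hab => Nat.rfindOpt_dom.2 ⟨Encodable.encode b, b, ?_⟩⟩
  · obtain ⟨n, hn⟩ := Nat.rfindOpt_spec hb
    obtain ⟨b', -, hb'⟩ := Option.bind_eq_some_iff.1 hn
    cases hcab : c (a, b') with
    | false => simp [hcab] at hb'
    | true =>
      obtain rfl : b' = b := by simpa [hcab] using hb'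
      exact (hcR a b').2 hcab
  · simp [search, (hcR a b).1 hab]

theorem computable_of_computablePred_graph {f : α → β}
    (hf : ComputablePred fun x : α × β => f x.1 = x.2) : Computable f := by
  obtain ⟨F, hF, hFsound, hFdom⟩ := exists_partrec_selector (R := fun a b => f a = b) hf
  refine hF.of_eq_tot fun a => ?_
  obtain ⟨b, hb⟩ := Part.dom_iff_mem.1 (hFdom a (f a) rfl)
  exact hFsound a b hb ▸ hb

theorem computable_nat_count {p : ℕ → Prop} [DecidablePred p] (hp : ComputablePred p) :
    Computable (Nat.count p) := by
  have hstep : Computable₂ fun (_ : ℕ) (m : ℕ × ℕ) => m.2 + bif decide (p m.1) then 1 else 0 := by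
    refine Primrec.nat_add.to_comp.comp (Computable.snd.comp Computable.snd)
      (Computable.cond (hp.decide.comp (Computable.fst.comp Computable.snd)) ?_ ?_) <;>
    exact Computable.const _
  refine (Computable.nat_rec Computable.id (Computable.const 0) hstep).of_eq fun n => ?_
  induction n with
  | zero => rfl
  | succ n ih => simp_all [Nat.count_succ, Bool.cond_decide]

theorem computable_nat_nth {p : ℕ → Prop} (hp : ComputablePred p) (hinf : {n | p n}.Infinite) :
    Computable (Nat.nth p) := by
  classical
  refine computable_of_computablePred_graph ?_
  have hgraph (k n : ℕ) : Nat.nth p k = n ↔ Nat.count p n = k ∧ p n := by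
    refine ⟨?_, ?_⟩
    · rintro rfl
      exact ⟨Nat.count_nth_of_infinite hinf k, Nat.nth_mem_of_infinite hinf k⟩
    · rintro ⟨rfl, hn⟩
      exact Nat.nth_count hn
  simp only [hgraph]
  exact computablePred_and
    (computablePred_eq_comp ((computable_nat_count hp).comp Computable.snd) Computable.fst)
    (computablePred_comp hp Computable.snd)

/-- The pairs `⟨k, n⟩` such that the computation of `c` on input `n` halts at stage `k + 1` but not
at stage `k`; each input on which `c` halts occurs in exactly one of them. -/
def HaltsExactlyAt (c : Nat.Partrec.Code) (w : ℕ) : Prop :=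
  (c.evaln (w.unpair.1 + 1) w.unpair.2).isSome = true ∧
    (c.evaln w.unpair.1 w.unpair.2).isSome = false

theorem computablePred_haltsExactlyAt (c : Nat.Partrec.Code) :
    ComputablePred (HaltsExactlyAt c) := by
  have heval {s : ℕ → ℕ} (hs : Primrec s) :
      Computable fun w : ℕ => (c.evaln (s w) w.unpair.2).isSome :=
    (Primrec.option_isSome.comp <| Nat.Partrec.Code.primrec_evaln.comp <|
      (hs.pair (Primrec.const c)).pair (Primrec.snd.comp Primrec.unpair)).to_comp
  have hfst : Primrec fun w : ℕ => w.unpair.1 := Primrec.fst.comp Primrec.unpair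
  exact computablePred_and
    (computablePred_eq_comp (heval (Primrec.succ.comp hfst)) (Computable.const true))
    (computablePred_eq_comp (heval hfst) (Computable.const false))

namespace HaltsExactlyAt

variable {c : Nat.Partrec.Code} {w w' : ℕ}

theorem eval_dom (hw : HaltsExactlyAt c w) : (c.eval w.unpair.2).Dom := by
  obtain ⟨y, hy⟩ := Option.isSome_iff_exists.1 hw.1
  exact Part.dom_iff_mem.2 ⟨y, Nat.Partrec.Code.evaln_sound hy⟩

theorem fst_le (hw : HaltsExactlyAt c w) (hw' : HaltsExactlyAt c w')
    (h : w.unpair.2 = w'.unpair.2) : w.unpair.1 ≤ w'.unpair.1 := by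
  by_contra! hlt
  obtain ⟨y, hy⟩ := Option.isSome_iff_exists.1 hw'.1
  have hy' : y ∈ c.evaln w.unpair.1 w.unpair.2 := h ▸ Nat.Partrec.Code.evaln_mono hlt hy
  simpa [Option.mem_def.1 hy'] using hw.2

theorem eq_of_snd_eq (hw : HaltsExactlyAt c w) (hw' : HaltsExactlyAt c w')
    (h : w.unpair.2 = w'.unpair.2) : w = w' := by
  rw [← Nat.pair_unpair w, ← Nat.pair_unpair w', h,
    (hw.fst_le hw' h).antisymm (hw'.fst_le hw h.symm)]

end HaltsExactlyAt

theorem exists_haltsExactlyAt {c : Nat.Partrec.Code} {n : ℕ} (hn : (c.eval n).Dom) :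
    ∃ w, HaltsExactlyAt c w ∧ w.unpair.2 = n := by
  classical
  obtain ⟨y, hy⟩ := Part.dom_iff_mem.1 hn
  have hhalts : ∃ k, (c.evaln k n).isSome = true := by
    obtain ⟨k, hk⟩ := Nat.Partrec.Code.evaln_complete.1 hy
    exact ⟨k, Option.isSome_iff_exists.2 ⟨y, hk⟩⟩
  obtain ⟨k, hk⟩ : ∃ k, Nat.find hhalts = k + 1 := by
    refine Nat.exists_eq_succ_of_ne_zero fun h => ?_
    simpa [h, Nat.Partrec.Code.evaln] using Nat.find_spec hhalts
  refine ⟨Nat.pair k n, ⟨?_, ?_⟩, by simp⟩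
  · simpa [hk] using Nat.find_spec hhalts
  · simpa using Nat.find_min hhalts (m := k) (by lia)

theorem exists_computable_enumeration_eval_dom {c : Nat.Partrec.Code}
    (hinf : {n | (c.eval n).Dom}.Infinite) :
    ∃ e : ℕ → ℕ, Computable e ∧ Function.Injective e ∧ Set.range e = {n | (c.eval n).Dom} := by
  have himage : (fun w => w.unpair.2) '' {w | HaltsExactlyAt c w} = {n | (c.eval n).Dom} :=
    Set.Subset.antisymm (Set.image_subset_iff.2 fun _ hw => hw.eval_dom)
      fun _ hn => exists_haltsExactlyAt hn
  have hDinf : {w | HaltsExactlyAt c w}.Infinite := .of_image (fun w => w.unpair.2) (himage ▸ hinf)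
  have hD (k : ℕ) : HaltsExactlyAt c (Nat.nth (HaltsExactlyAt c) k) :=
    Nat.nth_mem_of_infinite hDinf k
  refine ⟨fun k => (Nat.nth (HaltsExactlyAt c) k).unpair.2,
    (Computable.snd.comp Computable.unpair).comp
      (computable_nat_nth (computablePred_haltsExactlyAt c) hDinf),
    fun k k' h => Nat.nth_injective hDinf ((hD k).eq_of_snd_eq (hD k') h), ?_⟩
  rw [← himage, ← Nat.range_nth_of_infinite hDinf, ← Set.range_comp]
  rfl

theorem exists_computable_enumeration_dom {f : α →. σ} (hf : Partrec f)
    (hinf : {a | (f a).Dom}.Infinite) :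
    ∃ e : ℕ → α, Computable e ∧ Function.Injective e ∧ Set.range e = {a | (f a).Dom} := by
  obtain ⟨c, hc⟩ := Nat.Partrec.Code.exists_code.1 (Partrec.bind_decode₂_iff.1 hf)
  have himage : {n | (c.eval n).Dom} = Encodable.encode '' {a | (f a).Dom} := by
    ext n
    simp only [hc, Set.mem_ofPred_eq, Set.mem_image, Part.dom_iff_mem, Part.mem_bind_iff,
      Part.mem_coe, Encodable.mem_decode₂, Part.mem_map_iff]
    exact ⟨fun ⟨_, a, ha, y, hy, _⟩ => ⟨a, ⟨y, hy⟩, ha⟩,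
      fun ⟨a, ⟨y, hy⟩, ha⟩ => ⟨_, a, ha, y, hy, rfl⟩⟩
  obtain ⟨e₀, he₀, he₀inj, he₀range⟩ := exists_computable_enumeration_eval_dom
    (himage ▸ hinf.image Encodable.encode_injective.injOn)
  have hmem (k : ℕ) : e₀ k ∈ Encodable.encode '' {a | (f a).Dom} :=
    himage ▸ he₀range ▸ Set.mem_range_self k
  choose e _ he using hmem
  refine ⟨e, Computable.encode_iff.1 (he₀.of_eq fun k => (he k).symm), fun k k' h => ?_, ?_⟩
  · exact he₀inj (by rw [← he k, ← he k', h])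
  · refine Encodable.encode_injective.image_injective ?_
    rw [← Set.range_comp, ← himage, ← he₀range]
    exact congrArg Set.range (funext he)

end ComputableSearch

section ComputableRat

theorem encode_int (z : ℤ) :
    Encodable.encode z = if 0 ≤ z then 2 * z.natAbs else 2 * z.natAbs - 1 := by
  cases z with
  | ofNat n => rfl
  | negSucc n => rfl

theorem primrec_int_natAbs : Primrec Int.natAbs := by
  refine (Primrec.nat_div.comp (Primrec.succ.comp Primrec.encode) (Primrec.const 2)).of_eq
    fun z => ?_
  rw [encode_int]
  grind

theorem primrec_int_toNat : Primrec Int.toNat := by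
  refine (Primrec.ite (Primrec.eq.comp (Primrec.nat_mod.comp Primrec.encode (Primrec.const 2))
    (Primrec.const 0)) primrec_int_natAbs (Primrec.const 0)).of_eq fun z => ?_
  rw [encode_int]
  grind

theorem nat_coprime_iff_forall_lt {a b : ℕ} (hb : 0 < b) :
    a.Coprime b ↔ ∀ d < b + 1, a % d = 0 ∧ b % d = 0 → d = 1 := by
  simp only [← Nat.dvd_iff_mod_eq_zero]
  refine ⟨fun h d _ ⟨hda, hdb⟩ => Nat.eq_one_of_dvd_coprimes h hda hdb, fun h => ?_⟩
  exact h _ (Nat.lt_succ_of_le (Nat.gcd_le_right a hb))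
    ⟨Nat.gcd_dvd_left a b, Nat.gcd_dvd_right a b⟩

theorem primrecPred_pos_and_coprime :
    PrimrecPred fun x : ℕ × ℕ => 0 < x.2 ∧ x.1.Coprime x.2 := by
  have hdvd : PrimrecRel fun (d : ℕ) (x : ℕ × ℕ) => ¬ (x.1 % d = 0 ∧ x.2 % d = 0) ∨ d = 1 := by
    have hmod {f : ℕ × ℕ × ℕ → ℕ} (hf : Primrec f) : PrimrecPred fun x => f x % x.1 = 0 :=
      Primrec.eq.comp (Primrec.nat_mod.comp hf Primrec.fst) (Primrec.const 0)
    exact (PrimrecPred.or (((hmod (Primrec.fst.comp Primrec.snd)).and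
      (hmod (Primrec.snd.comp Primrec.snd))).not)
      (Primrec.eq.comp Primrec.fst (Primrec.const 1))).primrecRel
  have hpos : PrimrecPred fun x : ℕ × ℕ => 0 < x.2 :=
    Primrec.nat_lt.comp (Primrec.const 0) Primrec.snd
  have hforall := hdvd.forall_mem_list.comp
    (Primrec.list_range.comp (Primrec.succ.comp Primrec.snd)) (Primrec.id (α := ℕ × ℕ))
  refine (hpos.and hforall).of_eq fun x => and_congr_right fun hx => ?_
  simp only [nat_coprime_iff_forall_lt hx, List.mem_range, id, ← imp_iff_not_or]

/-- The code of a rational by the pair of its numerator and denominator. The encoding underlying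
`Primcodable ℚ` numbers the rationals by increasing values of this code. -/
def ratPairCode (q : ℚ) : ℕ := Nat.pair (Encodable.encode q.num) q.den

theorem mem_range_ratPairCode {n : ℕ} :
    n ∈ Set.range ratPairCode ↔
      0 < n.unpair.2 ∧ ((n.unpair.1 + 1) / 2).Coprime n.unpair.2 := by
  have hnatAbs (z : ℤ) : (Encodable.encode z + 1) / 2 = z.natAbs := by
    rw [encode_int]
    grind
  refine ⟨?_, fun ⟨hpos, hcop⟩ => ?_⟩
  · rintro ⟨q, rfl⟩
    simpa [ratPairCode, hnatAbs] using ⟨q.den_pos, q.reduced⟩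
  · have hz : Encodable.encode (Denumerable.ofNat ℤ n.unpair.1) = n.unpair.1 :=
      Denumerable.encode_ofNat _
    refine ⟨⟨Denumerable.ofNat ℤ n.unpair.1, n.unpair.2, hpos.ne', ?_⟩, ?_⟩
    · rwa [← hnatAbs, hz]
    · simp only [ratPairCode, hz, Nat.pair_unpair]

theorem computablePred_mem_range_ratPairCode : ComputablePred (· ∈ Set.range ratPairCode) := by
  have hfst : Primrec fun n : ℕ => n.unpair.1 := Primrec.fst.comp Primrec.unpair
  have hsnd : Primrec fun n : ℕ => n.unpair.2 := Primrec.snd.comp Primrec.unpair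
  refine ComputablePred.of_eq (PrimrecPred.computablePred (primrecPred_pos_and_coprime.comp
    ((Primrec.nat_div.comp (Primrec.succ.comp hfst) (Primrec.const 2)).pair hsnd)))
    fun n => mem_range_ratPairCode.symm

open Classical in
theorem primcodable_encode_rat (q : ℚ) :
    Primcodable.toEncodable.encode q =
      Nat.count (· ∈ Set.range ratPairCode) (ratPairCode q) := by
  have h : Primcodable.toEncodable.encode q = @Nat.count (· ∈ Set.range ratPairCode)
    (@Encodable.decidableRangeEncode ℚ Rat.instEncodable) (ratPairCode q) := rfl
  rw [h]
  congr 1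

theorem ratPairCode_injective : Function.Injective ratPairCode := fun q q' h =>
  Primcodable.toEncodable.encode_injective (by simp only [primcodable_encode_rat, h])

theorem computable_ratPairCode : Computable ratPairCode := by
  classical
  refine ((computable_nat_nth computablePred_mem_range_ratPairCode
    (Set.infinite_range_of_injective ratPairCode_injective)).comp Computable.encode).of_eq
    fun q => ?_
  rw [primcodable_encode_rat, Nat.nth_count (Set.mem_range_self q)]

theorem computable_rat_num : Computable Rat.num :=
  Computable.encode_iff.1 <|
    ((Computable.fst.comp Computable.unpair).comp computable_ratPairCode).of_eq fun q => by
      simp [ratPairCode]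

theorem computable_rat_den : Computable Rat.den :=
  ((Computable.snd.comp Computable.unpair).comp computable_ratPairCode).of_eq fun q => by
    simp [ratPairCode]

theorem rat_eq_toNat_sub_toNat_div (q : ℚ) :
    q = ((q.num.toNat : ℚ) - ((-q.num).toNat : ℚ)) / q.den := by
  have h : ((q.num.toNat : ℤ) : ℚ) - (((-q.num).toNat : ℤ) : ℚ) = q.num := by
    exact_mod_cast Int.toNat_sub_toNat_neg q.num
  rw [← Int.cast_natCast q.num.toNat, ← Int.cast_natCast (-q.num).toNat, h, Rat.num_div_den]

theorem computable_rat_num_toNat : Computable fun q : ℚ => q.num.toNat :=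
  primrec_int_toNat.to_comp.comp computable_rat_num

theorem computable_rat_neg_num_toNat : Computable fun q : ℚ => (-q.num).toNat :=
  (Primrec.nat_sub.to_comp.comp (primrec_int_natAbs.to_comp.comp computable_rat_num)
    computable_rat_num_toNat).of_eq fun q => by lia

theorem computable_rat_floor : Computable fun q : ℚ => ⌊q⌋₊ :=
  (Primrec.nat_div.to_comp.comp computable_rat_num_toNat computable_rat_den).of_eq fun q => by
    conv_rhs =>
      rw [← Rat.num_div_den q, Nat.floor_div_natCast, ← Int.floor_toNat, Int.floor_intCast]

section Arithmetic

variable {α : Type*} [Primcodable α] {f g : α → ℚ}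

theorem rat_lt_iff_toNat (x y : ℚ) :
    x < y ↔ x.num.toNat * y.den + (-y.num).toNat * x.den <
      y.num.toNat * x.den + (-x.num).toNat * y.den := by
  rw [← Nat.cast_lt (α := ℚ)]
  conv_lhs => rw [rat_eq_toNat_sub_toNat_div x, rat_eq_toNat_sub_toNat_div y]
  have hx : (0 : ℚ) < x.den := mod_cast x.den_pos
  have hy : (0 : ℚ) < y.den := mod_cast y.den_pos
  rw [div_lt_div_iff₀ hx hy]
  push_cast
  constructor <;> intro h <;> linarith

theorem computable_nat_add_comp {f g : α → ℕ} (hf : Computable f) (hg : Computable g) :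
    Computable fun a => f a + g a :=
  Primrec.nat_add.to_comp.comp hf hg

theorem computable_nat_mul_comp {f g : α → ℕ} (hf : Computable f) (hg : Computable g) :
    Computable fun a => f a * g a :=
  Primrec.nat_mul.to_comp.comp hf hg

theorem computablePred_rat_lt_comp (hf : Computable f) (hg : Computable g) :
    ComputablePred fun a => f a < g a := by
  have hnum {h : α → ℚ} (hh : Computable h) := computable_rat_num_toNat.comp hh
  have hneg {h : α → ℚ} (hh : Computable h) := computable_rat_neg_num_toNat.comp hh
  have hden {h : α → ℚ} (hh : Computable h) := computable_rat_den.comp hh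
  simp only [rat_lt_iff_toNat]
  exact computablePred_lt_comp
    (computable_nat_add_comp (computable_nat_mul_comp (hnum hf) (hden hg))
      (computable_nat_mul_comp (hneg hg) (hden hf)))
    (computable_nat_add_comp (computable_nat_mul_comp (hnum hg) (hden hf))
      (computable_nat_mul_comp (hneg hf) (hden hg)))

theorem computablePred_rat_le_comp (hf : Computable f) (hg : Computable g) :
    ComputablePred fun a => f a ≤ g a := by
  simp only [← not_lt]
  exact (computablePred_rat_lt_comp hg hf).not

theorem computable_rat_natCast_sub_div {a b d : α → ℕ} (ha : Computable a) (hb : Computable b)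
    (hd : Computable d) (hd0 : ∀ x, d x ≠ 0) :
    Computable fun x => ((a x : ℚ) - (b x : ℚ)) / (d x : ℚ) := by
  have hgraph (x : α) (q : ℚ) : ((a x : ℚ) - b x) / d x = q ↔
      a x * q.den + (-q.num).toNat * d x = q.num.toNat * d x + b x * q.den := by
    rw [← Nat.cast_inj (R := ℚ)]
    conv_lhs => rw [rat_eq_toNat_sub_toNat_div q]
    rw [div_eq_div_iff (mod_cast hd0 x) (mod_cast q.den_ne_zero)]
    push_cast
    constructor <;> intro h <;> linear_combination h
  refine computable_of_computablePred_graph ?_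
  simp only [hgraph]
  have hmul_den {c : α → ℕ} (hc : Computable c) :
      Computable fun x : α × ℚ => c x.1 * x.2.den :=
    computable_nat_mul_comp (hc.comp Computable.fst) (computable_rat_den.comp Computable.snd)
  have hmul_d {c : ℚ → ℕ} (hc : Computable c) :
      Computable fun x : α × ℚ => c x.2 * d x.1 :=
    computable_nat_mul_comp (hc.comp Computable.snd) (hd.comp Computable.fst)
  exact computablePred_eq_comp
    (computable_nat_add_comp (hmul_den ha) (hmul_d computable_rat_neg_num_toNat))
    (computable_nat_add_comp (hmul_d computable_rat_num_toNat) (hmul_den hb))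

theorem computable_rat_natCast : Computable fun n : ℕ => (n : ℚ) :=
  (computable_rat_natCast_sub_div Computable.id (Computable.const 0) (Computable.const 1)
    fun _ => one_ne_zero).of_eq fun n => by simp

theorem computable_rat_add_comp (hf : Computable f) (hg : Computable g) :
    Computable fun a => f a + g a := by
  have hnum {h : α → ℚ} (hh : Computable h) := computable_rat_num_toNat.comp hh
  have hneg {h : α → ℚ} (hh : Computable h) := computable_rat_neg_num_toNat.comp hh
  have hden {h : α → ℚ} (hh : Computable h) := computable_rat_den.comp hh
  refine (computable_rat_natCast_sub_div
    (computable_nat_add_comp (computable_nat_mul_comp (hnum hf) (hden hg))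
      (computable_nat_mul_comp (hnum hg) (hden hf)))
    (computable_nat_add_comp (computable_nat_mul_comp (hneg hf) (hden hg))
      (computable_nat_mul_comp (hneg hg) (hden hf)))
    (computable_nat_mul_comp (hden hf) (hden hg))
    fun a => mul_ne_zero (f a).den_ne_zero (g a).den_ne_zero).of_eq fun a => ?_
  conv_rhs => rw [rat_eq_toNat_sub_toNat_div (f a), rat_eq_toNat_sub_toNat_div (g a)]
  rw [div_add_div _ _ (mod_cast (f a).den_ne_zero) (mod_cast (g a).den_ne_zero)]
  push_cast
  ring

theorem computable_rat_mul_comp (hf : Computable f) (hg : Computable g) :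
    Computable fun a => f a * g a := by
  have hnum {h : α → ℚ} (hh : Computable h) := computable_rat_num_toNat.comp hh
  have hneg {h : α → ℚ} (hh : Computable h) := computable_rat_neg_num_toNat.comp hh
  have hden {h : α → ℚ} (hh : Computable h) := computable_rat_den.comp hh
  refine (computable_rat_natCast_sub_div
    (computable_nat_add_comp (computable_nat_mul_comp (hnum hf) (hnum hg))
      (computable_nat_mul_comp (hneg hf) (hneg hg)))
    (computable_nat_add_comp (computable_nat_mul_comp (hnum hf) (hneg hg))
      (computable_nat_mul_comp (hneg hf) (hnum hg)))
    (computable_nat_mul_comp (hden hf) (hden hg))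
    fun a => mul_ne_zero (f a).den_ne_zero (g a).den_ne_zero).of_eq fun a => ?_
  conv_rhs => rw [rat_eq_toNat_sub_toNat_div (f a), rat_eq_toNat_sub_toNat_div (g a)]
  rw [div_mul_div_comm]
  push_cast
  ring

theorem computable_rat_pow_comp {n : α → ℕ} (hf : Computable f) (hn : Computable n) :
    Computable fun a => f a ^ n a := by
  refine (Computable.nat_rec (h := fun a x => x.2 * f a) hn (Computable.const 1)
    (computable_rat_mul_comp (Computable.snd.comp Computable.snd)
      (hf.comp Computable.fst))).of_eq fun a => ?_
  induction n a with
  | zero => simp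
  | succ k ih => rw [pow_succ, ← ih]

theorem computable_rat_sum_range_comp {F : α → ℕ → ℚ} {n : α → ℕ} (hF : Computable₂ F)
    (hn : Computable n) : Computable fun a => ∑ i ∈ Finset.range (n a), F a i := by
  refine (Computable.nat_rec (h := fun a x => x.2 + F a x.1) hn (Computable.const 0)
    (computable_rat_add_comp (Computable.snd.comp Computable.snd) (hF.comp Computable.fst
      (Computable.fst.comp Computable.snd)))).of_eq fun a => ?_
  induction n a with
  | zero => simp
  | succ k ih => rw [Finset.sum_range_succ, ← ih]

end Arithmetic

end ComputableRat

section BinaryDigits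

/-- The `n` lowest binary digits of `N`, most significant digit first. -/
def binaryDigits (n N : ℕ) : List Bool :=
  (List.range n).map fun i => N.testBit (n - 1 - i)

@[simp]
theorem length_binaryDigits (n N : ℕ) : (binaryDigits n N).length = n := by
  simp [binaryDigits]

theorem primrec₂_nat_pow : Primrec₂ ((· ^ ·) : ℕ → ℕ → ℕ) :=
  Primrec₂.unpaired'.1 Nat.Primrec.pow

theorem primrec₂_binaryDigits : Primrec₂ binaryDigits := by
  have hbit : Primrec fun x : ℕ × ℕ => x.1.testBit x.2 :=
    ((Primrec.eq.decide.comp (Primrec.nat_mod.comp (Primrec.nat_div.comp Primrec.fst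
      (primrec₂_nat_pow.comp (Primrec.const 2) Primrec.snd)) (Primrec.const 2))
      (Primrec.const 1))).of_eq fun x => Nat.testBit_eq_decide_div_mod_eq.symm
  have hmap : Primrec₂ fun (x : ℕ × ℕ) (i : ℕ) => x.2.testBit (x.1 - 1 - i) :=
    hbit.comp ((Primrec.snd.comp Primrec.fst).pair (Primrec.nat_sub.comp (Primrec.nat_sub.comp
      (Primrec.fst.comp Primrec.fst) (Primrec.const 1)) Primrec.snd))
  exact Primrec.list_map (Primrec.list_range.comp Primrec.fst) hmap

theorem binaryDigits_injOn (n : ℕ) : Set.InjOn (binaryDigits n) (Set.Iio (2 ^ n)) := by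
  intro N hN N' hN' h
  refine Nat.eq_of_testBit_eq fun i => ?_
  rcases lt_or_ge i n with hi | hi
  · have := List.map_inj_left.1 h (n - 1 - i) (List.mem_range.2 (by lia))
    rwa [show n - 1 - (n - 1 - i) = i by lia] at this
  · have hpow := Nat.pow_le_pow_right (n := 2) two_pos hi
    rw [Nat.testBit_eq_false_of_lt (hN.trans_le hpow),
      Nat.testBit_eq_false_of_lt (hN'.trans_le hpow)]

theorem bits_eq_binaryDigits (x : ℝ) (n : ℕ) :
    bits x n = binaryDigits n ⌊Int.fract x * 2 ^ n⌋₊ := by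
  refine List.map_congr_left fun i hi => ?_
  have hi : i < n := List.mem_range.1 hi
  have hpow : (2 : ℝ) ^ n = 2 ^ (i + 1) * (2 ^ (n - 1 - i) : ℕ) := by
    rw [Nat.cast_pow, Nat.cast_ofNat, ← pow_add]
    congr 1
    lia
  have hfloor : ⌊Int.fract x * 2 ^ n⌋₊ / 2 ^ (n - 1 - i) = ⌊Int.fract x * 2 ^ (i + 1)⌋₊ := by
    rw [← Nat.floor_div_natCast, hpow, ← mul_assoc, mul_div_cancel_right₀ _ (by positivity)]
  have hnonneg : 0 ≤ Int.fract x * 2 ^ (i + 1) := by positivity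
  rw [binDigit, Nat.testBit_eq_decide_div_mod_eq, hfloor, ← Int.natCast_floor_eq_floor hnonneg]
  norm_cast

end BinaryDigits

section PrefixCodes

theorem PrefixFree.uniquelyDecodable {S : Set (List Bool)} (hS : PrefixFree S) (hnil : [] ∉ S) :
    InformationTheory.UniquelyDecodable S := by
  have hne {p : List Bool} {L : List (List Bool)} (h : ∀ w ∈ p :: L, w ∈ S) :
      (p :: L).flatten ≠ [] := fun hflat =>
    hnil ((List.append_eq_nil_iff.1 hflat).1 ▸ h p List.mem_cons_self)
  intro L₁
  induction L₁ with
  | nil =>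
    rintro (_ | ⟨q, L₂⟩) _ h₂ h
    · rfl
    · exact absurd h.symm (hne h₂)
  | cons p L₁ ih =>
    rintro (_ | ⟨q, L₂⟩) h₁ h₂ h
    · exact absurd h (hne h₁)
    · have hp := List.forall_mem_cons.1 h₁
      have hq := List.forall_mem_cons.1 h₂
      rw [List.flatten_cons, List.flatten_cons] at h
      obtain rfl : p = q := by
        rcases List.prefix_or_prefix_of_prefix (h ▸ List.prefix_append p L₁.flatten)
          (List.prefix_append q L₂.flatten) with hpq | hqp
        · exact hS p hp.1 q hq.1 hpq
        · exact (hS q hq.1 p hp.1 hqp).symm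
      rw [ih L₂ hp.2 hq.2 (List.append_cancel_left h)]

theorem PrefixFree.sum_two_pow_le_one {S : Set (List Bool)} (hS : PrefixFree S) (hnil : [] ∉ S)
    {ι : Type*} {e : ι → List Bool} (he : Function.Injective e) (hmem : ∀ i, e i ∈ S)
    (s : Finset ι) : ∑ i ∈ s, (1 / 2 : ℝ) ^ (e i).length ≤ 1 := by
  have hsub : ((s.map ⟨e, he⟩ : Finset (List Bool)) : Set (List Bool)) ⊆ S := by
    rw [Finset.coe_map]
    exact Set.image_subset_iff.2 fun i _ => hmem i
  have hdec : InformationTheory.UniquelyDecodable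
      ((s.map ⟨e, he⟩ : Finset (List Bool)) : Set (List Bool)) := fun L₁ L₂ h₁ h₂ =>
    hS.uniquelyDecodable hnil L₁ L₂ (fun w hw => hsub (h₁ w hw)) fun w hw => hsub (h₂ w hw)
  simpa using InformationTheory.kraft_mcmillan_inequality hdec

theorem PrefixFree.nil_notMem {S : Set (List Bool)} (hS : PrefixFree S) (h : S.Nontrivial) :
    [] ∉ S := fun hnil =>
  let ⟨p, hp, hne⟩ := h.exists_ne []
  hne (hS [] hnil p hp List.nil_prefix).symm

theorem exists_computer_of_prefix_code {ι : Type*} [Primcodable ι] {c : ι → List Bool}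
    (hc : Computable c) {valid : ι → Prop} (hvalid : ComputablePred valid)
    (hprefix : ∀ i i', valid i → valid i' → c i <+: c i' → i = i') {f : ι →. List Bool}
    (hf : Partrec f) : ∃ C : Computer, ∀ i, valid i → C.f (c i) = f i := by
  obtain ⟨F, hF, hFsound, hFdom⟩ := exists_partrec_selector
    (R := fun (p : List Bool) (i : ι) => valid i ∧ c i = p)
    (computablePred_and (computablePred_comp hvalid Computable.snd)
      (computablePred_eq_comp (hc.comp Computable.snd) Computable.fst))
  refine ⟨⟨fun p => (F p).bind f, hF.bind (hf.comp Computable.snd), ?_⟩, fun i hi => ?_⟩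
  · intro p hp q hq hpq
    obtain ⟨i, hi⟩ := Part.dom_iff_mem.1 hp.1
    obtain ⟨i', hi'⟩ := Part.dom_iff_mem.1 hq.1
    obtain ⟨hvalid, rfl⟩ := hFsound p i hi
    obtain ⟨hvalid', rfl⟩ := hFsound q i' hi'
    rw [hprefix i i' hvalid hvalid' hpq]
  · obtain ⟨i', hi'⟩ := Part.dom_iff_mem.1 (hFdom (c i) i ⟨hi, rfl⟩)
    obtain ⟨hvalid', hci⟩ := hFsound _ _ hi'
    obtain rfl := hprefix i' i hvalid' hi (hci ▸ List.prefix_rfl)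
    exact (congrArg (Part.bind · f) (Part.eq_some_iff.2 hi')).trans (Part.bind_some i' f)

end PrefixCodes

section OptimalComputers

variable {U : Computer}

theorem IsOptimal.exists_mem (hU : IsOptimal U) (s : List Bool) : ∃ p, s ∈ U.f p := by
  obtain ⟨C, hC⟩ := exists_computer_of_prefix_code (c := fun _ : Unit => []) (Computable.const [])
    (valid := (· = ())) (computablePred_eq_comp Computable.id (Computable.const ()))
    (fun _ _ _ _ _ => rfl) (f := fun _ => Part.some s) (Computable.const s).partrec
  have hs : s ∈ C.f [] := hC () rfl ▸ Part.mem_some s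
  obtain ⟨d, hd⟩ := hU C
  obtain ⟨p, -, hp⟩ := hd [] (Part.dom_iff_mem.2 ⟨s, hs⟩)
  exact ⟨p, hp s hs⟩

theorem IsOptimal.domain_infinite (hU : IsOptimal U) : U.domain.Infinite := by
  choose p hp using hU.exists_mem
  refine Set.infinite_of_injective_forall_mem (f := p) (fun s s' h => ?_)
    fun s => Part.dom_iff_mem.2 ⟨s, hp s⟩
  exact Part.mem_unique (hp s) (h ▸ hp s')

theorem IsOptimal.nil_notMem_domain (hU : IsOptimal U) : [] ∉ U.domain :=
  U.prefixFree.nil_notMem hU.domain_infinite.nontrivial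

theorem H_le_length {p s : List Bool} (h : s ∈ U.f p) : H U s ≤ p.length :=
  Nat.sInf_le ⟨p, rfl, h⟩

theorem IsOptimal.exists_H_le_of_prefix_code (hU : IsOptimal U) {ι : Type*} [Primcodable ι]
    {c : ι → List Bool} (hc : Computable c) {valid : ι → Prop} (hvalid : ComputablePred valid)
    (hprefix : ∀ i i', valid i → valid i' → c i <+: c i' → i = i') {f : ι →. List Bool}
    (hf : Partrec f) : ∃ d, ∀ i s, valid i → s ∈ f i → H U s ≤ (c i).length + d := by
  obtain ⟨C, hC⟩ := exists_computer_of_prefix_code hc hvalid hprefix hf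
  obtain ⟨d, hd⟩ := hU C
  refine ⟨d, fun i s hi hs => ?_⟩
  have hs : s ∈ C.f (c i) := hC i hi ▸ hs
  obtain ⟨p, hlen, hp⟩ := hd (c i) (Part.dom_iff_mem.2 ⟨s, hs⟩)
  exact (H_le_length (hp s hs)).trans hlen

theorem replicate_true_append_false_prefix {j j' : ℕ} {u v : List Bool}
    (h : List.replicate j true ++ false :: u <+: List.replicate j' true ++ false :: v) :
    j = j' ∧ u <+: v := by
  induction j generalizing j' with
  | zero => cases j' <;> simp_all [List.replicate_succ]
  | succ j ih =>
    cases j' with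
    | zero => simp [List.replicate_succ] at h
    | succ j' =>
      simp only [List.replicate_succ, List.cons_append, List.cons_prefix_cons, true_and] at h
      exact ⟨congrArg _ (ih h).1, (ih h).2⟩

theorem IsOptimal.exists_H_le_of_block (hU : IsOptimal U) (a : ℕ) {f : ℕ × ℕ →. List Bool}
    (hf : Partrec f) :
    ∃ d, ∀ j b s, b < 2 ^ (a * j) → s ∈ f (j, b) → H U s ≤ (a + 1) * j + d := by
  have hlen : Primrec fun x : ℕ × ℕ => a * x.1 :=
    Primrec.nat_mul.comp (Primrec.const a) Primrec.fst
  have hcode : Computable fun x : ℕ × ℕ =>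
      List.replicate x.1 true ++ false :: binaryDigits (a * x.1) x.2 := by
    have hreplicate : Primrec fun x : ℕ × ℕ => List.replicate x.1 true :=
      (Primrec.list_map (Primrec.list_range.comp Primrec.fst) (Primrec₂.const true)).of_eq
        fun x => by simp [List.map_const']
    exact (Primrec.list_append.comp hreplicate (Primrec.list_cons.comp (Primrec.const false)
      (primrec₂_binaryDigits.comp hlen Primrec.snd))).to_comp
  have hvalid : ComputablePred fun x : ℕ × ℕ => x.2 < 2 ^ (a * x.1) :=
    computablePred_lt_comp Computable.snd
      (primrec₂_nat_pow.comp (Primrec.const 2) hlen).to_comp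
  obtain ⟨d, hd⟩ := hU.exists_H_le_of_prefix_code hcode hvalid (by
    rintro ⟨j, b⟩ ⟨j', b'⟩ hb hb' h
    obtain ⟨rfl, hdigits⟩ := replicate_true_append_false_prefix h
    exact congrArg (Prod.mk j)
      (binaryDigits_injOn (a * j) hb hb' (hdigits.eq_of_length (by simp)))) hf
  refine ⟨d + 1, fun j b s hb hs => (hd (j, b) s hb hs).trans_eq ?_⟩
  simp only [List.length_append, List.length_replicate, List.length_cons, length_binaryDigits]
  ring

end OptimalComputers

section BitWeight

/-- The factor that each bit of a program contributes to its term of the partition function at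
temperature `T`, so that `Z(T)` is the sum of `bitWeight T ^ |p|` over all programs `p`. -/
noncomputable def bitWeight (T : ℝ) : ℝ := 2 ^ (-1 / T)

theorem bitWeight_pos (T : ℝ) : 0 < bitWeight T := by
  unfold bitWeight
  positivity

theorem bitWeight_one : bitWeight 1 = 1 / 2 := by
  norm_num [bitWeight, Real.rpow_neg_one]

variable {T t : ℝ}

theorem bitWeight_le_bitWeight (hT : 0 < T) (h : T ≤ t) : bitWeight T ≤ bitWeight t := by
  refine Real.rpow_le_rpow_of_exponent_le one_le_two ?_
  rw [neg_div, neg_div, neg_le_neg_iff]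
  exact one_div_le_one_div_of_le hT h

theorem continuousAt_bitWeight (hT : T ≠ 0) : ContinuousAt bitWeight T :=
  (Real.continuousAt_const_rpow two_ne_zero).comp (continuousAt_const.div continuousAt_id hT)

theorem bitWeight_pow (T : ℝ) (n : ℕ) : bitWeight T ^ n = 2 ^ (-(n : ℝ) / T) := by
  rw [bitWeight, ← Real.rpow_mul_natCast zero_le_two]
  congr 1
  ring

theorem bitWeight_pow_le {a M : ℕ} (hT : 0 < T) (h : T * M ≤ a) :
    bitWeight T ^ a ≤ (1 / 2) ^ M := by
  rw [bitWeight_pow, one_div, ← Real.rpow_natCast, Real.inv_rpow zero_le_two,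
    ← Real.rpow_neg zero_le_two]
  refine Real.rpow_le_rpow_of_exponent_le one_le_two ?_
  rw [neg_div, neg_le_neg_iff, le_div_iff₀ hT, mul_comm]
  exact h

theorem bitWeight_le_iff {t : ℚ} (ht : 0 < t) {ξ : ℝ} :
    bitWeight t ≤ ξ ↔ 0 ≤ ξ ∧ 1 ≤ ξ ^ t.num.toNat * 2 ^ t.den := by
  have hnum : (0 : ℤ) < t.num := Rat.num_pos.2 ht
  have hcast : (t : ℝ) = t.num.toNat / t.den := by
    rw [Rat.cast_def, ← Int.cast_natCast (R := ℝ) t.num.toNat, Int.toNat_of_nonneg hnum.le]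
  have hpow : bitWeight t ^ t.num.toNat = (2 ^ t.den)⁻¹ := by
    have hne : (t.num.toNat : ℝ) ≠ 0 := by exact_mod_cast (by lia : t.num.toNat ≠ 0)
    rw [bitWeight_pow, hcast, ← Real.rpow_natCast, ← Real.rpow_neg zero_le_two]
    congr 1
    field_simp
  refine ⟨fun h => ⟨(bitWeight_pos _).le.trans h, ?_⟩, fun ⟨hξ, h⟩ => ?_⟩
  · rw [← inv_le_iff_one_le_mul₀ (by positivity), ← hpow]
    exact pow_le_pow_left₀ (bitWeight_pos _).le h _
  · rw [← inv_le_iff_one_le_mul₀ (by positivity), ← hpow] at h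
    exact (pow_le_pow_iff_left₀ (bitWeight_pos _).le hξ (by lia)).1 h

theorem bitWeight_pow_mul_le_sub {n : ℕ} (hn : n ≠ 0) (hT : 0 < T) (h : T ≤ t) (ht : t ≤ 1) :
    bitWeight T ^ n * (Real.log 2 * (t - T)) ≤ bitWeight t ^ n - bitWeight T ^ n := by
  have ht0 : 0 < t := hT.trans_le h
  have hsub : t - T ≤ n * (1 / T - 1 / t) := by
    have hinv : t - T ≤ 1 / T - 1 / t := by
      rw [div_sub_div _ _ hT.ne' ht0.ne', one_mul, mul_one,
        le_div_iff₀ (mul_pos hT ht0)]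
      exact mul_le_of_le_one_right (sub_nonneg.2 h) (mul_le_one₀ (h.trans ht) ht0.le ht)
    exact hinv.trans (le_mul_of_one_le_left ((sub_nonneg.2 h).trans hinv)
      (mod_cast Nat.one_le_iff_ne_zero.2 hn))
  have hratio : bitWeight t ^ n =
      bitWeight T ^ n * Real.exp (Real.log 2 * (n * (1 / T - 1 / t))) := by
    rw [bitWeight_pow, bitWeight_pow, ← Real.rpow_def_of_pos two_pos, ← Real.rpow_add two_pos]
    congr 1
    ring
  have hexp : Real.log 2 * (t - T) + 1 ≤ Real.exp (Real.log 2 * (n * (1 / T - 1 / t))) := by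
    refine le_trans ?_ (Real.add_one_le_exp _)
    linarith [mul_le_mul_of_nonneg_left hsub (Real.log_pos one_lt_two).le]
  rw [hratio, ← mul_sub_one]
  exact mul_le_mul_of_nonneg_left (by linarith) (pow_pos (bitWeight_pos T) n).le

end BitWeight

section CodeLengths

theorem tsum_pow_le_pow_of_le {ι : Type*} {ℓ : ι → ℕ} {x y : ℝ} {L : ℕ} (hx : 0 ≤ x)
    (hxy : x ≤ y) (hy : 0 < y) (hy' : y < 1) (hsum : Summable fun i => y ^ ℓ i)
    (h : ∑' i, y ^ ℓ i ≤ y ^ L) : ∑' i, x ^ ℓ i ≤ x ^ L := by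
  have hL (i : ι) : L ≤ ℓ i := (pow_le_pow_iff_right_of_lt_one₀ hy hy').1 <|
    (hsum.le_tsum i fun j _ => pow_nonneg hy.le _).trans h
  have hterm (i : ι) : x ^ ℓ i ≤ (x / y) ^ L * y ^ ℓ i :=
    calc x ^ ℓ i = (x / y) ^ ℓ i * y ^ ℓ i := by rw [← mul_pow, div_mul_cancel₀ _ hy.ne']
      _ ≤ (x / y) ^ L * y ^ ℓ i := mul_le_mul_of_nonneg_right
        (pow_le_pow_of_le_one (by positivity) (div_le_one_of_le₀ hxy hy.le) (hL i))
        (by positivity)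
  calc ∑' i, x ^ ℓ i ≤ ∑' i, (x / y) ^ L * y ^ ℓ i :=
        Summable.tsum_le_tsum hterm (.of_nonneg_of_le (fun i => by positivity) hterm
          (hsum.mul_left _)) (hsum.mul_left _)
    _ = (x / y) ^ L * ∑' i, y ^ ℓ i := tsum_mul_left
    _ ≤ (x / y) ^ L * y ^ L := by gcongr
    _ = x ^ L := by rw [← mul_pow, div_mul_cancel₀ _ hy.ne']

end CodeLengths

section Certificates

variable {ℓ : ℕ → ℕ} {g h : ℕ → ℚ} {T : ℝ} {L b : ℕ} {w : ℕ × ℚ × ℕ}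

/-- A finite witness `(k, ξ, n)` that `g n` is close to `T`. It is meant for `g` and `h`
approximating `T` and `-∑' i, bitWeight T ^ ℓ i` from above, and `b` with
`b < 2 ^ L * ∑' i, (1 / 2) ^ ℓ i ≤ b + 1`. Then the lengths from `ℓ k` on have Kraft weight at most
`2⁻ᴸ`, and the sum over the first `k` lengths at temperature `g n` is below the full sum at
temperature `T`; the rational bound `ξ` on `bitWeight (g n)` makes the latter decidable. -/
structure IsCertificate (ℓ : ℕ → ℕ) (g h : ℕ → ℚ) (L b : ℕ) (w : ℕ × ℚ × ℕ) : Prop where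
  lt_sum : (b : ℝ) < 2 ^ L * ∑ i ∈ Finset.range w.1, (1 / 2) ^ ℓ i
  le_one : (g w.2.2 : ℝ) ≤ 1
  bitWeight_le : bitWeight (g w.2.2) ≤ w.2.1
  sum_add_neg : ∑ i ∈ Finset.range w.1, (w.2.1 : ℝ) ^ ℓ i + h w.2.2 < 0

theorem computablePred_isCertificate (hℓ : Computable ℓ) (hg : Computable g) (hh : Computable h)
    (hg0 : ∀ n, 0 < g n) :
    ComputablePred fun x : (ℕ × ℕ) × ℕ × ℚ × ℕ => IsCertificate ℓ g h x.1.1 x.1.2 x.2 := by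
  have hL : Computable fun x : (ℕ × ℕ) × ℕ × ℚ × ℕ => x.1.1 :=
    Computable.fst.comp Computable.fst
  have hb : Computable fun x : (ℕ × ℕ) × ℕ × ℚ × ℕ => x.1.2 :=
    Computable.snd.comp Computable.fst
  have hk : Computable fun x : (ℕ × ℕ) × ℕ × ℚ × ℕ => x.2.1 :=
    Computable.fst.comp Computable.snd
  have hξ : Computable fun x : (ℕ × ℕ) × ℕ × ℚ × ℕ => x.2.2.1 :=
    Computable.fst.comp (Computable.snd.comp Computable.snd)
  have hn : Computable fun x : (ℕ × ℕ) × ℕ × ℚ × ℕ => x.2.2.2 :=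
    Computable.snd.comp (Computable.snd.comp Computable.snd)
  have hsum {ξ : (ℕ × ℕ) × ℕ × ℚ × ℕ → ℚ} (hξ : Computable ξ) :
      Computable fun x => ∑ i ∈ Finset.range x.2.1, ξ x ^ ℓ i :=
    computable_rat_sum_range_comp
      (computable_rat_pow_comp (hξ.comp Computable.fst) (hℓ.comp Computable.snd)).to₂ hk
  have htwo {m : (ℕ × ℕ) × ℕ × ℚ × ℕ → ℕ} (hm : Computable m) :
      Computable fun x => (2 : ℚ) ^ m x := computable_rat_pow_comp (Computable.const 2) hm
  refine ComputablePred.of_eq (computablePred_and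
    (computablePred_rat_lt_comp (computable_rat_natCast.comp hb)
      (computable_rat_mul_comp (htwo hL) (hsum (Computable.const (1 / 2)))))
    (computablePred_and (computablePred_rat_le_comp (hg.comp hn) (Computable.const 1))
    (computablePred_and (computablePred_and
      (computablePred_rat_le_comp (Computable.const 0) hξ)
      (computablePred_rat_le_comp (Computable.const 1) (computable_rat_mul_comp
        (computable_rat_pow_comp hξ (computable_rat_num_toNat.comp (hg.comp hn)))
        (htwo (computable_rat_den.comp (hg.comp hn))))))
    (computablePred_rat_lt_comp (computable_rat_add_comp (hsum hξ) (hh.comp hn))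
      (Computable.const 0))))) fun x => ?_
  rw [← Rat.cast_lt (K := ℝ) (p := (x.1.2 : ℚ)), ← Rat.cast_le (K := ℝ) (p := g x.2.2.2),
    ← Rat.cast_le (K := ℝ) (p := 0), ← Rat.cast_le (K := ℝ) (p := 1),
    ← Rat.cast_lt (K := ℝ) (q := 0)]
  push_cast
  rw [← bitWeight_le_iff (hg0 _)]
  exact ⟨fun ⟨h1, h2, h3, h4⟩ => ⟨h1, h2, h3, h4⟩, fun ⟨h1, h2, h3, h4⟩ => ⟨h1, h2, h3, h4⟩⟩

theorem exists_isCertificate (hT0 : 0 < T) (hT1 : T < 1)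
    (hg : Tendsto (fun n => (g n : ℝ)) atTop (nhds T)) {Z : ℝ}
    (hh : Tendsto (fun n => (h n : ℝ)) atTop (nhds (-Z))) {k : ℕ}
    (hZ : ∑ i ∈ Finset.range k, bitWeight T ^ ℓ i < Z)
    (hb : (b : ℝ) < 2 ^ L * ∑ i ∈ Finset.range k, (1 / 2) ^ ℓ i) :
    ∃ w, IsCertificate ℓ g h L b w := by
  obtain ⟨m, hm, hmZ⟩ := exists_between hZ
  have hcont : Continuous fun ξ : ℝ => ∑ i ∈ Finset.range k, ξ ^ ℓ i := by fun_prop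
  obtain ⟨y, hy, hlt⟩ : ∃ y > bitWeight T,
      ∀ ξ ∈ Set.Ico (bitWeight T) y, ∑ i ∈ Finset.range k, ξ ^ ℓ i < m :=
    exists_Ico_subset_of_mem_nhds (hcont.continuousAt.eventually (gt_mem_nhds hm))
      (exists_gt _)
  obtain ⟨ξ, hξ, hξy⟩ := exists_rat_btwn hy
  have hweight : ∀ᶠ n in atTop, bitWeight (g n) < ξ :=
    ((continuousAt_bitWeight hT0.ne').tendsto.comp hg).eventually (gt_mem_nhds hξ)
  obtain ⟨n, hn1, hnξ, hnh⟩ := ((hg.eventually (gt_mem_nhds hT1)).and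
    (hweight.and (hh.eventually (gt_mem_nhds (neg_lt_neg hmZ))))).exists
  exact ⟨(k, ξ, n), hb, hn1.le, hnξ.le, by linarith [hlt ξ ⟨hξ.le, hξy⟩]⟩

theorem summable_bitWeight_pow (hT0 : 0 < T) (hT1 : T ≤ 1)
    (hℓ : Summable fun i => (1 / 2 : ℝ) ^ ℓ i) : Summable fun i => bitWeight T ^ ℓ i :=
  hℓ.of_nonneg_of_le (fun _ => (pow_pos (bitWeight_pos T) _).le) fun _ =>
    pow_le_pow_left₀ (bitWeight_pos T).le (bitWeight_one ▸ bitWeight_le_bitWeight hT0 hT1) _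

theorem tsum_tail_bitWeight_pow_le (hT0 : 0 < T) (hT1 : T ≤ 1)
    (hℓ : Summable fun i => (1 / 2 : ℝ) ^ ℓ i) {k : ℕ}
    (hbL : (∑' i, (1 / 2 : ℝ) ^ ℓ i) * 2 ^ L ≤ b + 1)
    (hb : (b : ℝ) < 2 ^ L * ∑ i ∈ Finset.range k, (1 / 2) ^ ℓ i) :
    ∑' i, bitWeight T ^ ℓ (i + k) ≤ bitWeight T ^ L := by
  refine tsum_pow_le_pow_of_le (bitWeight_pos T).le
    (bitWeight_one ▸ bitWeight_le_bitWeight hT0 hT1) one_half_pos one_half_lt_one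
    ((summable_nat_add_iff k).2 hℓ) ?_
  rw [← hℓ.sum_add_tsum_nat_add k] at hbL
  rw [one_div_pow 2 L, le_div_iff₀ (by positivity)]
  linarith

theorem IsCertificate.sub_le (hw : IsCertificate ℓ g h L b w) (hT0 : 0 < T)
    (hgT : ∀ n, T ≤ g n) (hh : ∀ n, -∑' i, bitWeight T ^ ℓ i ≤ h n)
    (hℓ : Summable fun i => (1 / 2 : ℝ) ^ ℓ i) (hℓ0 : ℓ 0 ≠ 0)
    (hbL : (∑' i, (1 / 2 : ℝ) ^ ℓ i) * 2 ^ L ≤ b + 1) :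
    g w.2.2 - T ≤ (Real.log 2 * bitWeight T ^ ℓ 0)⁻¹ * bitWeight T ^ L := by
  obtain ⟨k, ξ, n⟩ := w
  obtain ⟨hb, hg1, hξ, hneg⟩ := hw
  dsimp only at hb hg1 hξ hneg ⊢
  have hT1 : T ≤ 1 := (hgT n).trans hg1
  have hle : bitWeight T ≤ bitWeight (g n) := bitWeight_le_bitWeight hT0 (hgT n)
  have hk : 0 < k := Nat.pos_of_ne_zero fun hk => by simp [hk] at hb; linarith
  have hterm (i : ℕ) : 0 ≤ bitWeight (g n) ^ ℓ i - bitWeight T ^ ℓ i :=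
    sub_nonneg.2 (pow_le_pow_left₀ (bitWeight_pos T).le hle _)
  have hfirst : bitWeight T ^ ℓ 0 * (Real.log 2 * (g n - T)) ≤
      ∑ i ∈ Finset.range k, (bitWeight (g n) ^ ℓ i - bitWeight T ^ ℓ i) :=
    (bitWeight_pow_mul_le_sub hℓ0 hT0 (hgT n) hg1).trans <|
      Finset.single_le_sum (f := fun i => bitWeight (g n) ^ ℓ i - bitWeight T ^ ℓ i)
        (fun i _ => hterm i) (Finset.mem_range.2 hk)
  have hsum : ∑ i ∈ Finset.range k, bitWeight (g n) ^ ℓ i ≤ ∑' i, bitWeight T ^ ℓ i := by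
    have := Finset.sum_le_sum fun i (_ : i ∈ Finset.range k) =>
      pow_le_pow_left₀ (bitWeight_pos (g n)).le hξ (ℓ i)
    linarith [hh n]
  have htail : ∑' i, bitWeight T ^ ℓ (i + k) ≤ bitWeight T ^ L :=
    tsum_tail_bitWeight_pow_le hT0 hT1 hℓ hbL hb
  rw [← (summable_bitWeight_pow hT0 hT1 hℓ).sum_add_tsum_nat_add k] at hsum
  rw [Finset.sum_sub_distrib] at hfirst
  rw [inv_mul_eq_div, le_div_iff₀ (mul_pos (Real.log_pos one_lt_two)
    (pow_pos (bitWeight_pos T) _))]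
  linarith

theorem exists_lt_two_pow_mul_sum (hℓ : Summable fun i => (1 / 2 : ℝ) ^ ℓ i)
    (hℓ1 : ∑' i, (1 / 2 : ℝ) ^ ℓ i ≤ 1) (L : ℕ) :
    ∃ b : ℕ, b < 2 ^ L ∧ (∑' i, (1 / 2 : ℝ) ^ ℓ i) * 2 ^ L ≤ b + 1 ∧
      ∃ k, (b : ℝ) < 2 ^ L * ∑ i ∈ Finset.range k, (1 / 2) ^ ℓ i := by
  set Ω := ∑' i, (1 / 2 : ℝ) ^ ℓ i
  have hΩ : 0 < Ω := hℓ.tsum_pos (fun i => by positivity) 0 (by positivity)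
  obtain ⟨b, hb⟩ := Nat.exists_eq_succ_of_ne_zero 
    (Nat.ceil_pos.2 (show 0 < Ω * 2 ^ L by positivity)).ne'
  have hbΩ : (b : ℝ) < 2 ^ L * Ω := mul_comm Ω _ ▸ Nat.lt_ceil.1 (hb ▸ b.lt_succ_self)
  have hceil : ⌈Ω * 2 ^ L⌉₊ ≤ 2 ^ L := Nat.ceil_le.2 <| by
    push_cast
    exact mul_le_of_le_one_left (by positivity) hℓ1
  refine ⟨b, Nat.lt_of_succ_le (hb ▸ hceil), ?_, ?_⟩
  · exact_mod_cast hb ▸ Nat.le_ceil (Ω * 2 ^ L)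
  · exact ((hℓ.hasSum.tendsto_sum_nat.const_mul _).eventually (lt_mem_nhds hbΩ)).exists

theorem exists_partrec_approx (hℓ : Computable ℓ) (hℓ0 : ℓ 0 ≠ 0)
    (hkraft : ∀ s : Finset ℕ, ∑ i ∈ s, (1 / 2 : ℝ) ^ ℓ i ≤ 1) (hT0 : 0 < T) (hT1 : T < 1)
    (hZ : LeftComputable (∑' i, bitWeight T ^ ℓ i)) (hT : RightComputable T) :
    ∃ F : ℕ × ℕ →. ℚ, Partrec F ∧ ∃ C ≥ 0, ∀ L, ∃ b : ℕ, b < 2 ^ L ∧ ∃ t ∈ F (L, b),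
      T ≤ t ∧ t - T ≤ C * bitWeight T ^ L := by
  obtain ⟨g, hg, hgT, hgtendsto⟩ := hT
  obtain ⟨h, hh, hhZ, hhtendsto⟩ := hZ
  have hg0 (n : ℕ) : 0 < g n := by exact_mod_cast hT0.trans_le (hgT n)
  have hsummable : Summable fun i => (1 / 2 : ℝ) ^ ℓ i :=
    summable_of_sum_le (fun i => by positivity) hkraft
  obtain ⟨W, hW, hWsound, hWdom⟩ :=
    exists_partrec_selector (R := fun x : ℕ × ℕ => IsCertificate ℓ g h x.1 x.2)
      (computablePred_isCertificate hℓ hg hh hg0)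
  have hvalue : Computable₂ fun (_ : ℕ × ℕ) (w : ℕ × ℚ × ℕ) => g w.2.2 :=
    hg.comp (Computable.snd.comp (Computable.snd.comp Computable.snd))
  have hF : Partrec fun x => (W x).map fun w => g w.2.2 := hW.map hvalue
  refine ⟨_, hF, (Real.log 2 * bitWeight T ^ ℓ 0)⁻¹, ?_, fun L => ?_⟩
  · have := bitWeight_pos T
    positivity
  obtain ⟨b, hb, hbL, k, hbk⟩ :=
    exists_lt_two_pow_mul_sum hsummable (hsummable.tsum_le_of_sum_le hkraft) L
  have hsum : ∑ i ∈ Finset.range k, bitWeight T ^ ℓ i < ∑' i, bitWeight T ^ ℓ i := by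
    have hpos (i : ℕ) : 0 < bitWeight T ^ ℓ i := pow_pos (bitWeight_pos T) _
    refine (Finset.sum_lt_sum_of_subset (Finset.range_subset_range.2 k.le_succ)
      (Finset.self_mem_range_succ k) Finset.notMem_range_self (hpos k)
      fun i _ _ => (hpos i).le).trans_le ?_
    exact (summable_bitWeight_pow hT0 hT1.le hsummable).sum_le_tsum _ fun i _ => (hpos i).le
  obtain ⟨w, hw⟩ := exists_isCertificate hT0 hT1 hgtendsto hhtendsto hsum hbk
  obtain ⟨w, hw⟩ := Part.dom_iff_mem.1 (hWdom (L, b) w hw)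
  exact ⟨b, hb, g w.2.2, Part.mem_map _ hw, hgT _,
    (hWsound _ w hw).sub_le hT0 hgT hhZ hsummable hℓ0 hbL⟩

end Certificates

section Approximation

variable {U : Computer}

theorem exists_natFloor_eq_sub {u v : ℝ} {E : ℕ} (hu : 0 ≤ u) (huv : u ≤ v) (hv : v ≤ u + E) :
    ∃ e ≤ E, ⌊u⌋₊ = ⌊v⌋₊ - e := by
  have hle : ⌊u⌋₊ ≤ ⌊v⌋₊ := Nat.floor_le_floor huv
  have hE : ⌊v⌋₊ ≤ ⌊u⌋₊ + E := Nat.floor_add_natCast hu E ▸ Nat.floor_le_floor hv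
  exact ⟨⌊v⌋₊ - ⌊u⌋₊, by lia, by lia⟩

theorem partrec_map_binaryDigits_floor {F : ℕ × ℕ →. ℚ} (hF : Partrec F) (M r e : ℕ) :
    Partrec fun x : ℕ × ℕ => (F x).map fun t =>
      binaryDigits (M * x.1 + r) (⌊t * 2 ^ (M * x.1 + r)⌋₊ - e) := by
  have hn : Computable fun y : (ℕ × ℕ) × ℚ => M * y.1.1 + r :=
    computable_nat_add_comp (computable_nat_mul_comp (Computable.const M)
      (Computable.fst.comp Computable.fst)) (Computable.const r)
  have hdigits : Computable₂ fun (x : ℕ × ℕ) (t : ℚ) =>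
      binaryDigits (M * x.1 + r) (⌊t * 2 ^ (M * x.1 + r)⌋₊ - e) :=
    primrec₂_binaryDigits.to_comp.comp hn <| Primrec.nat_sub.to_comp.comp
      (computable_rat_floor.comp (computable_rat_mul_comp Computable.snd
        (computable_rat_pow_comp (Computable.const 2) hn))) (Computable.const e)
  exact hF.map hdigits

theorem bits_eq_binaryDigits_floor_sub {x : ℝ} (hx0 : 0 ≤ x) (hx1 : x < 1) {t : ℚ} (hxt : x ≤ t)
    {n E : ℕ} (h : (t - x) * 2 ^ n ≤ E) :
    ∃ e ≤ E, bits x n = binaryDigits n (⌊t * 2 ^ n⌋₊ - e) := by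
  obtain ⟨e, he, hfloor⟩ := exists_natFloor_eq_sub (u := x * 2 ^ n) (v := t * 2 ^ n) (E := E)
    (by positivity) (by gcongr) (by linarith)
  have hcast : ⌊t * 2 ^ n⌋₊ = ⌊(t : ℝ) * 2 ^ n⌋₊ := by
    rw [← Int.floor_toNat, ← Int.floor_toNat, ← Rat.floor_cast (α := ℝ)]
    push_cast
    rfl
  exact ⟨e, he, by rw [bits_eq_binaryDigits, Int.fract_eq_self.2 ⟨hx0, hx1⟩, hfloor, hcast]⟩

-- Only finitely many pairs `(n % M, e)` occur, where `e` is the rounding error of the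
-- approximation, so each pair gets a computer of its own and `d` is the largest constant.
theorem IsOptimal.exists_H_bits_le_of_approx (hU : IsOptimal U) {x : ℝ} (hx0 : 0 ≤ x) (hx1 : x < 1)
    {F : ℕ × ℕ →. ℚ} (hF : Partrec F) {a M : ℕ} (hM : 0 < M) {K : ℝ}
    (h : ∀ j, ∃ b < 2 ^ (a * j), ∃ t ∈ F (j, b), x ≤ t ∧ (t - x) * 2 ^ (M * j) ≤ K) :
    ∃ d, ∀ n, H U (bits x n) ≤ (a + 1) * (n / M) + d := by
  choose d hd using fun r e =>
    hU.exists_H_le_of_block a (partrec_map_binaryDigits_floor hF M r e)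
  set E := ⌈K * 2 ^ M⌉₊
  refine ⟨(Finset.range M ×ˢ Finset.range (E + 1)).sup fun i => d i.1 i.2, fun n => ?_⟩
  obtain ⟨b, hb, t, ht, hxt, hK⟩ := h (n / M)
  have hr : n % M < M := Nat.mod_lt n hM
  have herror : (t - x) * 2 ^ n ≤ E :=
    calc (t - x) * 2 ^ n = (t - x) * 2 ^ (M * (n / M)) * 2 ^ (n % M) := by
          rw [mul_assoc, ← pow_add, Nat.div_add_mod]
      _ ≤ (t - x) * 2 ^ (M * (n / M)) * 2 ^ M := by
          have := sub_nonneg.2 hxt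
          gcongr
          exact one_le_two
      _ ≤ K * 2 ^ M := by gcongr
      _ ≤ E := Nat.le_ceil _
  obtain ⟨e, he, hbits⟩ := bits_eq_binaryDigits_floor_sub hx0 hx1 hxt herror
  have hmem : bits x n ∈ (F (n / M, b)).map fun t =>
      binaryDigits (M * (n / M) + n % M) (⌊t * 2 ^ (M * (n / M) + n % M)⌋₊ - e) := by
    rw [Nat.div_add_mod, hbits]
    exact Part.mem_map _ ht
  refine (hd (n % M) e _ b _ hb hmem).trans (Nat.add_le_add_left ?_ _)
  exact Finset.le_sup (f := fun i : ℕ × ℕ => d i.1 i.2) (b := (n % M, e)) (Finset.mem_product.2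
    ⟨Finset.mem_range.2 hr, Finset.mem_range.2 (Nat.lt_succ_of_le he)⟩)

theorem limsup_div_natCast_le {f : ℕ → ℝ} {c : ℝ} (hf : ∀ n, 0 ≤ f n)
    (h : ∀ ε > 0, ∃ d, ∀ n : ℕ, f n ≤ (c + ε) * n + d) : limsup (fun n => f n / n) atTop ≤ c := by
  refine le_of_forall_pos_le_add fun ε hε => ?_
  obtain ⟨d, hd⟩ := h (ε / 2) (half_pos hε)
  refine limsup_le_of_le (isCoboundedUnder_le_of_le atTop (x := 0) fun n =>
    div_nonneg (hf n) n.cast_nonneg) ?_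
  filter_upwards [eventually_gt_atTop 0, eventually_ge_atTop ⌈d / (ε / 2)⌉₊] with n hn0 hn
  have hdn : d ≤ n * (ε / 2) := (div_le_iff₀ (half_pos hε)).1 (Nat.ceil_le.1 hn)
  rw [div_le_iff₀ (by exact_mod_cast hn0)]
  linarith [hd n]

theorem exists_ceil_mul_add_one_div_le {T ε : ℝ} (hT : 0 ≤ T) (hε : 0 < ε) :
    ∃ M : ℕ, 0 < M ∧ ((⌈T * M⌉₊ + 1 : ℕ) : ℝ) / M ≤ T + ε := by
  obtain ⟨M, hM⟩ := exists_nat_gt (2 / ε)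
  have hM0 : (0 : ℝ) < M := (by positivity : 0 < 2 / ε).trans hM
  refine ⟨M, by exact_mod_cast hM0, ?_⟩
  rw [div_le_iff₀ hM0]
  push_cast
  linarith [Nat.ceil_lt_add_one (mul_nonneg hT hM0.le), (div_lt_iff₀ hε).1 hM]

theorem IsOptimal.exists_H_bits_le_mul_add (hU : IsOptimal U) {T : ℝ} (hT0 : 0 < T) (hT1 : T < 1)
    {F : ℕ × ℕ →. ℚ} (hF : Partrec F) {C : ℝ} (hC : 0 ≤ C)
    (h : ∀ L, ∃ b : ℕ, b < 2 ^ L ∧ ∃ t ∈ F (L, b), T ≤ t ∧ t - T ≤ C * bitWeight T ^ L) {ε : ℝ}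
    (hε : 0 < ε) : ∃ d : ℝ, ∀ n : ℕ, H U (bits T n) ≤ (T + ε) * n + d := by
  obtain ⟨M, hM, hMε⟩ := exists_ceil_mul_add_one_div_le hT0.le hε
  set a := ⌈T * M⌉₊
  have hblock : Computable fun x : ℕ × ℕ => (a * x.1, x.2) :=
    (computable_nat_mul_comp (Computable.const a) Computable.fst).pair Computable.snd
  obtain ⟨d, hd⟩ := hU.exists_H_bits_le_of_approx hT0.le hT1 (hF.comp hblock) (a := a) (K := C)
    hM fun j => by
      obtain ⟨b, hb, t, ht, hTt, htT⟩ := h (a * j)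
      refine ⟨b, hb, t, ht, hTt, ?_⟩
      have hweight : bitWeight T ^ (a * j) ≤ (1 / 2) ^ (M * j) := bitWeight_pow_le hT0 <| by
        push_cast
        rw [← mul_assoc]
        gcongr
        exact Nat.le_ceil _
      calc (t - T) * 2 ^ (M * j) ≤ C * (1 / 2) ^ (M * j) * 2 ^ (M * j) := by
            gcongr
            exact htT.trans (by gcongr)
        _ = C := by rw [mul_assoc, ← mul_pow]; norm_num
  refine ⟨d, fun n => ?_⟩
  calc (H U (bits T n) : ℝ) ≤ ((a + 1 : ℕ) : ℝ) * (n / M : ℕ) + d := by exact_mod_cast hd n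
    _ ≤ ((a + 1 : ℕ) : ℝ) * (n / M) + d := by gcongr; exact Nat.cast_div_le
    _ = ((a + 1 : ℕ) : ℝ) / M * n + d := by ring
    _ ≤ (T + ε) * n + d := by gcongr

end Approximation

theorem IsOptimal.exists_domain_lengths {U : Computer} (hU : IsOptimal U) :
    ∃ ℓ : ℕ → ℕ, Computable ℓ ∧ ℓ 0 ≠ 0 ∧
      (∀ s : Finset ℕ, ∑ i ∈ s, (1 / 2 : ℝ) ^ ℓ i ≤ 1) ∧
      ∀ T, ∑' p, zterm U T p = ∑' i, bitWeight T ^ ℓ i := by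
  obtain ⟨e, he, hinj, hrange⟩ := exists_computable_enumeration_dom U.partrec hU.domain_infinite
  have hmem (i : ℕ) : e i ∈ U.domain := hrange.subset (Set.mem_range_self i)
  refine ⟨fun i => (e i).length, Primrec.list_length.to_comp.comp he, ?_,
    U.prefixFree.sum_two_pow_le_one hU.nil_notMem_domain hinj hmem, fun T => ?_⟩
  · exact fun h => hU.nil_notMem_domain (List.length_eq_zero_iff.1 h ▸ hmem 0)
  · have hbij : Function.Bijective fun i => (⟨e i, hmem i⟩ : U.domain) :=
      ⟨fun _ _ h => hinj (congrArg Subtype.val h), fun ⟨p, hp⟩ => by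
        obtain ⟨i, rfl⟩ : p ∈ Set.range e := hrange.superset hp
        exact ⟨i, rfl⟩⟩
    rw [← (Equiv.ofBijective _ hbij).tsum_eq]
    exact tsum_congr fun i => (bitWeight_pow T _).symm

/-- **Theorem (paper Thm 19).** For `T ∈ (0,1)`, if `Z(T)` is left-computable
and `T` is right-computable, then `T` is `T`-compressible:
`limsup_{n→∞} H(T_n)/n ≤ T`. -/
theorem leftComputable_Z_imp_T_compressible (U : Computer)
    (hU : IsOptimal U) (T : ℝ) (hT0 : 0 < T) (hT1 : T < 1)
    (hZ : LeftComputable (∑' p, zterm U T p))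
    (hT : RightComputable T) :
    Filter.limsup (fun n : ℕ => (H U (bits T n) : ℝ) / n) atTop ≤ T := by
  obtain ⟨ℓ, hℓ, hℓ0, hkraft, hZℓ⟩ := hU.exists_domain_lengths
  obtain ⟨F, hF, C, hC, happrox⟩ :=
    exists_partrec_approx hℓ hℓ0 hkraft hT0 hT1 (hZℓ T ▸ hZ) hT
  exact limsup_div_natCast_le (fun _ => Nat.cast_nonneg _) fun _ hε =>
    hU.exists_H_bits_le_mul_add hT0 hT1 hF hC happrox hε
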